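/- In the bounded-degree uniform attachment process, for any fixed s ≥ m, with high probability (i.e., with probability tending to 1 as n → ∞) the degree of the vertex s in G_n equals d. Moreover, for any fixed n_0 and a, with high probability every vertex of G_n at graph distance at most a from the set [n_0] = {1, …, n_0} has degree exactly d in G_n. -/

import Mathlib

open MeasureTheory ProbabilityTheory Filter Topology
open scoped ENNReal

/-- The degree of a vertex in a simple graph on `ℕ` (the number of its neighbours). -/
noncomputable def graphDeg (g : SimpleGraph ℕ) (v : ℕ) : ℕ := (g.neighborSet v).ncard

/-- The complete graph on the vertex set `[m] = {1,…,m}`, viewed as a simple graph on `ℕ`. -/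
def initGraph (m : ℕ) : SimpleGraph ℕ :=
  SimpleGraph.fromRel (fun a b => a ∈ Finset.Icc 1 m ∧ b ∈ Finset.Icc 1 m)

/-- The graph obtained from `g` by joining the (new) vertex `v` to every vertex of `S`. -/
def attachStep (g : SimpleGraph ℕ) (v : ℕ) (S : Finset ℕ) : SimpleGraph ℕ :=
  g ⊔ SimpleGraph.fromRel (fun a b => a = v ∧ b ∈ S)

/-- The set of vertices of `[n] = {1,…,n}` whose degree in `g` is strictly less than `d`. -/
noncomputable def lowDegSet (d : ℕ) (g : SimpleGraph ℕ) (n : ℕ) : Finset ℕ :=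
  (Finset.Icc 1 n).filter (fun v => graphDeg g v < d)

/-- `IsUAProcess m d μ G` says that `(G n)_{n ≥ m}` (as random graphs on `ℕ`, with `G n`
supported on the vertex set `[n] = {1,…,n}`) is the bounded-degree uniform attachment
process: `G m` is the complete graph on `[m]`, and `G (n+1)` is obtained from `G n` by
joining the new vertex `n+1` to a uniformly chosen `m`-element subset of the set of
vertices of `G n` of degree less than `d`, conditionally on `G n` and independently of
the past (note that `G n` determines the whole past of the process). -/
def IsUAProcess (m d : ℕ) {Ω : Type*} [MeasurableSpace Ω] (μ : Measure Ω)
    (G : ℕ → Ω → SimpleGraph ℕ) : Prop :=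
  (∀ n g, MeasurableSet {ω | G n ω = g}) ∧
  (∀ ω, G m ω = initGraph m) ∧
  (∀ n, m ≤ n → ∀ g : SimpleGraph ℕ, ∀ S : Finset ℕ,
    S ⊆ lowDegSet d g n → S.card = m →
    μ ({ω | G (n + 1) ω = attachStep g (n + 1) S} ∩ {ω | G n ω = g})
      = μ {ω | G n ω = g} / (((lowDegSet d g n).card.choose m : ℝ≥0∞)))

/-!
While a vertex `s` has degree less than `d`, the new vertex `n + 1` joins it with conditional
probability `m / |lowDegSet|`, which is at least `1 / n`. So if `s` stayed below degree `d` forever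
with probability `p`, its expected number of neighbours would be at least `p ∑ 1 / n`; as this
number never exceeds `d` and the harmonic series diverges, `p = 0`. A vertex of degree `d` gains no
further neighbours, so almost surely the neighbourhoods of finitely many vertices are eventually
constant, and balls around `[n₀]` are handled by induction on the radius.

The step never gets stuck: the degrees sum to `2mn - m(m + 1)` and are all at least `m - 1`, which
for `2m ≤ d` leaves at least `m` vertices of degree less than `d`.
-/

open scoped Finset

section

variable {Ω α : Type*}

lemma card_mul_card_filter_mem_powersetCard [DecidableEq α] {A : Finset α} {a : α} (ha : a ∈ A)
    (m : ℕ) : #A * #{S ∈ A.powersetCard m | a ∈ S} = m * (#A).choose m := by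
  cases m with
  | zero => simp
  | succ k =>
    have hcard := Finset.card_filter_powersetCard_subset {a} A (k + 1) (by simpa) (by simp)
    simp only [Finset.singleton_subset_iff, Finset.card_singleton, Nat.add_sub_cancel] at hcard
    obtain ⟨N, hN⟩ := Nat.exists_eq_add_of_lt (Finset.card_pos.2 ⟨a, ha⟩)
    rw [hcard, hN, zero_add, Nat.add_sub_cancel, Nat.add_one_mul_choose_eq, mul_comm]

lemma finite_setOf_support_subset {s : Set α} (hs : s.Finite) :
    {g : SimpleGraph α | g.support ⊆ s}.Finite := by
  have hsym : s.sym2.Finite := by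
    rw [← hs.coe_toFinset, ← Finset.coe_sym2]
    exact Finset.finite_toSet _
  exact (hsym.finite_subsets.preimage SimpleGraph.edgeSet_injective.injOn).subset
    fun g hg => SimpleGraph.edgeSet_subset_sym2_iff.2 hg

lemma tsum_inv_natCast_add_eq_top {N : ℕ} (hN : N ≠ 0) :
    ∑' i : ℕ, ((N + i : ℕ) : ℝ≥0∞)⁻¹ = ⊤ := by
  have hcoe (i : ℕ) : ((N + i : ℕ) : ℝ≥0∞)⁻¹ = (((N + i : ℕ) : NNReal)⁻¹ : NNReal) := by
    rw [ENNReal.coe_inv (by norm_cast; omega), ENNReal.coe_natCast]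
  simp_rw [hcoe, ENNReal.tsum_coe_eq_top_iff_not_summable_coe, NNReal.coe_inv,
    NNReal.coe_natCast, add_comm N]
  exact mt (summable_nat_add_iff (f := fun i : ℕ => (i : ℝ)⁻¹) N).1 Real.not_summable_natCast_inv

variable [MeasurableSpace Ω] {μ : Measure Ω}

lemma sum_measure_le_mul_measure_univ {ι : Type*} {t : Finset ι} {E : ι → Set Ω} {k : ℕ}
    [∀ ω, DecidablePred (ω ∈ E ·)] (hE : ∀ i ∈ t, NullMeasurableSet (E i) μ)
    (hk : ∀ᵐ ω ∂μ, #{i ∈ t | ω ∈ E i} ≤ k) : ∑ i ∈ t, μ (E i) ≤ k * μ Set.univ := by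
  have hmeas : ∀ i ∈ t, AEMeasurable ((E i).indicator (1 : Ω → ℝ≥0∞)) μ :=
    fun i hi => aemeasurable_const.indicator₀ (hE i hi)
  calc ∑ i ∈ t, μ (E i) = ∫⁻ ω, ∑ i ∈ t, (E i).indicator 1 ω ∂μ := by
        rw [lintegral_finsetSum' _ hmeas]
        exact Finset.sum_congr rfl fun i hi => (lintegral_indicator_one₀ (hE i hi)).symm
    _ = ∫⁻ ω, (#{i ∈ t | ω ∈ E i} : ℝ≥0∞) ∂μ := by
        simp [Set.indicator_apply]
    _ ≤ ∫⁻ _, (k : ℝ≥0∞) ∂μ := lintegral_mono_ae (hk.mono fun ω hω => Nat.cast_le.2 hω)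
    _ = k * μ Set.univ := lintegral_const _

lemma nullMeasurableSet_preimage_of_ae_mem_countable {X : Ω → α} {F : Set α} (hF : F.Countable)
    (hX : ∀ a ∈ F, MeasurableSet (X ⁻¹' {a})) (hXF : ∀ᵐ ω ∂μ, X ω ∈ F) (t : Set α) :
    NullMeasurableSet (X ⁻¹' t) μ := by
  have hmeas : MeasurableSet (X ⁻¹' (t ∩ F)) := by
    rw [← Set.biUnion_preimage_singleton]
    exact .biUnion (hF.mono Set.inter_subset_right) fun a ha => hX a ha.2
  refine hmeas.nullMeasurableSet.congr ?_
  rw [Set.preimage_inter]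
  exact inter_ae_eq_left_of_ae_eq_univ (ae_eq_univ.2 hXF)

lemma measure_preimage_le_mul_of_fiber_le {X : Ω → α} {F t : Set α} {E : Set Ω} {c : ℝ≥0∞}
    (hF : F.Finite) (hX : ∀ a ∈ F, MeasurableSet (X ⁻¹' {a})) (hXF : ∀ᵐ ω ∂μ, X ω ∈ F)
    (hc : ∀ a ∈ F ∩ t, μ (X ⁻¹' {a}) ≤ c * μ (E ∩ X ⁻¹' {a})) : μ (X ⁻¹' t) ≤ c * μ E := by
  have hFt : (F ∩ t).Finite := hF.inter_of_left t
  have hXFt : ∀ a ∈ hFt.toFinset, MeasurableSet (X ⁻¹' {a}) :=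
    fun a ha => hX a (hFt.mem_toFinset.1 ha).1
  calc μ (X ⁻¹' t) ≤ μ (X ⁻¹' hFt.toFinset) :=
        measure_mono_ae (hXF.mono fun ω hω ht => hFt.mem_toFinset.2 ⟨hω, ht⟩)
    _ = ∑ a ∈ hFt.toFinset, μ (X ⁻¹' {a}) := (sum_measure_preimage_singleton _ hXFt).symm
    _ ≤ ∑ a ∈ hFt.toFinset, c * μ.restrict E (X ⁻¹' {a}) := by
        refine Finset.sum_le_sum fun a ha => ?_
        rw [Measure.restrict_apply (hXFt a ha), Set.inter_comm]
        exact hc a (hFt.mem_toFinset.1 ha)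
    _ = c * μ.restrict E (X ⁻¹' hFt.toFinset) := by
        rw [← Finset.mul_sum, sum_measure_preimage_singleton _ hXFt]
    _ ≤ c * μ E := mul_le_mul_right
        ((measure_mono (Set.subset_univ _)).trans_eq (Measure.restrict_apply_univ E)) c

lemma tendsto_measure_of_ae_eventually {P : ℕ → Ω → Prop} (h : ∀ᵐ ω ∂μ, ∀ᶠ n in atTop, P n ω) :
    Tendsto (fun n => μ {ω | P n ω}) atTop (𝓝 (μ Set.univ)) := by
  have hmono : Monotone fun N => {ω | ∀ n, N ≤ n → P n ω} :=
    fun N N' hN ω hω n hn => hω n (hN.trans hn)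
  have hunion : μ (⋃ N, {ω | ∀ n, N ≤ n → P n ω}) = μ Set.univ := by
    refine measure_congr (ae_eq_univ.2 (h.mono fun ω hω => ?_))
    exact Set.mem_iUnion.2 (eventually_atTop.1 hω)
  have hlim := tendsto_measure_iUnion_atTop (μ := μ) hmono
  rw [hunion] at hlim
  exact tendsto_of_tendsto_of_tendsto_of_le_of_le hlim tendsto_const_nhds
    (fun N => measure_mono fun ω hω => hω N le_rfl) (fun N => measure_mono (Set.subset_univ _))

end

section Attach

variable {d n v w : ℕ} {g : SimpleGraph ℕ} {S : Finset ℕ}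

lemma attachStep_adj {a b : ℕ} :
    (attachStep g v S).Adj a b ↔ g.Adj a b ∨ (a ≠ b ∧ (a = v ∧ b ∈ S ∨ b = v ∧ a ∈ S)) := by
  simp [attachStep]

lemma le_attachStep : g ≤ attachStep g v S := le_sup_left

lemma neighborSet_attachStep_self (hv : v ∉ g.support) (hvS : v ∉ S) :
    (attachStep g v S).neighborSet v = S := by
  ext w
  have hvw : ¬ g.Adj v w := fun h => hv h.mem_support_left
  simp only [SimpleGraph.mem_neighborSet, attachStep_adj, Finset.mem_coe, hvw, false_or]
  grind

lemma neighborSet_attachStep_of_mem (hwv : w ≠ v) (hw : w ∈ S) :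
    (attachStep g v S).neighborSet w = insert v (g.neighborSet w) := by
  ext x
  simp only [SimpleGraph.mem_neighborSet, attachStep_adj, Set.mem_insert_iff]
  grind

lemma neighborSet_attachStep_of_notMem (hwv : w ≠ v) (hw : w ∉ S) :
    (attachStep g v S).neighborSet w = g.neighborSet w := by
  ext x
  simp only [SimpleGraph.mem_neighborSet, attachStep_adj]
  grind

lemma graphDeg_attachStep_self (hv : v ∉ g.support) (hvS : v ∉ S) :
    graphDeg (attachStep g v S) v = #S := by
  rw [graphDeg, neighborSet_attachStep_self hv hvS, Set.ncard_coe_finset]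

lemma graphDeg_attachStep_of_ne (hv : v ∉ g.support) (hfin : g.support.Finite) (hwv : w ≠ v) :
    graphDeg (attachStep g v S) w = graphDeg g w + if w ∈ S then 1 else 0 := by
  split_ifs with hw
  · have hvw : v ∉ g.neighborSet w := fun h => hv (g.neighborSet_subset_support w h)
    rw [graphDeg, neighborSet_attachStep_of_mem hwv hw,
      Set.ncard_insert_of_notMem hvw (hfin.subset (g.neighborSet_subset_support w)), graphDeg]
  · rw [graphDeg, neighborSet_attachStep_of_notMem hwv hw, graphDeg, add_zero]

lemma graphDeg_initGraph {m : ℕ} (hv : v ∈ Finset.Icc 1 m) : graphDeg (initGraph m) v = m - 1 := by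
  have h : (initGraph m).neighborSet v = ((Finset.Icc 1 m).erase v : Finset ℕ) := by
    ext w
    simp only [initGraph, SimpleGraph.mem_neighborSet, SimpleGraph.fromRel_adj, Finset.mem_coe,
      Finset.mem_erase]
    tauto
  rw [graphDeg, h, Set.ncard_coe_finset, Finset.card_erase_of_mem hv, Nat.card_Icc,
    Nat.add_sub_cancel]

lemma mem_lowDegSet : v ∈ lowDegSet d g n ↔ v ∈ Finset.Icc 1 n ∧ graphDeg g v < d :=
  Finset.mem_filter

lemma lowDegSet_subset : lowDegSet d g n ⊆ Finset.Icc 1 n := Finset.filter_subset _ _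

lemma card_lowDegSet_le : #(lowDegSet d g n) ≤ n :=
  (Finset.card_le_card lowDegSet_subset).trans_eq (by simp)

lemma succ_notMem_of_subset_Icc (hS : S ⊆ Finset.Icc 1 n) : n + 1 ∉ S :=
  fun h => by simpa using hS h

lemma attachStep_injOn (hg : g.support ⊆ Finset.Icc 1 n) :
    Set.InjOn (attachStep g (n + 1)) {S | S ⊆ Finset.Icc 1 n} := by
  intro S hS T hT h
  have hn : n + 1 ∉ g.support := fun h => by simpa using hg h
  rw [← Finset.coe_inj, ← neighborSet_attachStep_self hn (succ_notMem_of_subset_Icc hS), h,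
    neighborSet_attachStep_self hn (succ_notMem_of_subset_Icc hT)]

end Attach

/-- One step of the process from `[n]` to `[n + 1]`: the graph `g'` arises from `g` by joining
`n + 1` to some `m` vertices of `[n]` of degree less than `d`. -/
def UAStep (m d n : ℕ) (g g' : SimpleGraph ℕ) : Prop :=
  ∃ S ∈ (lowDegSet d g n).powersetCard m, attachStep g (n + 1) S = g'

/-- The properties of a graph on `[n]` that every step of the process preserves. The last two are
free of subtraction: degrees are at least `m - 1` and sum to `2mn - m(m + 1)`. -/
structure UAInvariant (m d n : ℕ) (g : SimpleGraph ℕ) : Prop where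
  support_subset : g.support ⊆ Finset.Icc 1 n
  deg_le : ∀ v ∈ Finset.Icc 1 n, graphDeg g v ≤ d
  le_deg : ∀ v ∈ Finset.Icc 1 n, m ≤ graphDeg g v + 1
  sum_deg : ∑ v ∈ Finset.Icc 1 n, graphDeg g v + m * (m + 1) = 2 * m * n

/-- A sequence of graphs that is a possible realization of the process; its terms before time `m`
are irrelevant. -/
structure IsUAPath (m d : ℕ) (γ : ℕ → SimpleGraph ℕ) : Prop where
  init : γ m = initGraph m
  step : ∀ n, m ≤ n → UAStep m d n (γ n) (γ (n + 1))

lemma uaInvariant_initGraph {m d : ℕ} (hd : 2 * m ≤ d) : UAInvariant m d m (initGraph m) where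
  support_subset v hv := by
    obtain ⟨w, hvw⟩ := (SimpleGraph.mem_support _).1 hv
    rw [initGraph, SimpleGraph.fromRel_adj] at hvw
    exact hvw.2.elim And.left And.right
  deg_le v hv := by rw [graphDeg_initGraph hv]; omega
  le_deg v hv := by rw [graphDeg_initGraph hv]; omega
  sum_deg := by
    rw [Finset.sum_congr rfl fun v hv => graphDeg_initGraph hv, Finset.sum_const, Nat.card_Icc,
      smul_eq_mul]
    cases m with
    | zero => simp
    | succ k => simp only [Nat.add_sub_cancel]; ring

namespace UAInvariant

variable {m d n : ℕ} {g : SimpleGraph ℕ}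

lemma succ_notMem_support (h : UAInvariant m d n g) : n + 1 ∉ g.support :=
  fun hn => by simpa using h.support_subset hn

lemma finite_support (h : UAInvariant m d n g) : g.support.Finite :=
  (Finset.finite_toSet _).subset h.support_subset

lemma graphDeg_attachStep (h : UAInvariant m d n g) (S : Finset ℕ) {v : ℕ}
    (hv : v ∈ Finset.Icc 1 n) :
    graphDeg (attachStep g (n + 1) S) v = graphDeg g v + if v ∈ S then 1 else 0 :=
  graphDeg_attachStep_of_ne h.succ_notMem_support h.finite_support
    (by rintro rfl; simp at hv)

lemma of_uaStep (h : UAInvariant m d n g) (hd : 2 * m ≤ d) {g' : SimpleGraph ℕ}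
    (hg' : UAStep m d n g g') : UAInvariant m d (n + 1) g' := by
  obtain ⟨S, hS, rfl⟩ := hg'
  obtain ⟨hSlow, hScard⟩ := Finset.mem_powersetCard.1 hS
  have hSn : S ⊆ Finset.Icc 1 n := hSlow.trans lowDegSet_subset
  have hnew : graphDeg (attachStep g (n + 1) S) (n + 1) = m := by
    rw [graphDeg_attachStep_self h.succ_notMem_support (succ_notMem_of_subset_Icc hSn), hScard]
  have hIcc : Finset.Icc 1 (n + 1) = insert (n + 1) (Finset.Icc 1 n) :=
    (Finset.insert_Icc_right_eq_Icc_add_one (by omega)).symm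
  refine ⟨fun v hv => ?_, ?_, ?_, ?_⟩
  · obtain ⟨w, hvw⟩ := (SimpleGraph.mem_support _).1 hv
    rw [hIcc, Finset.coe_insert, Set.mem_insert_iff]
    rcases attachStep_adj.1 hvw with hvw | ⟨-, ⟨rfl, -⟩ | ⟨-, hvS⟩⟩
    · exact .inr (h.support_subset hvw.mem_support_left)
    · exact .inl rfl
    · exact .inr (hSn hvS)
  · rw [hIcc, Finset.forall_mem_insert, hnew]
    refine ⟨by omega, fun v hv => ?_⟩
    rw [h.graphDeg_attachStep S hv]
    split_ifs with hvS
    · exact (mem_lowDegSet.1 (hSlow hvS)).2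
    · exact h.deg_le v hv
  · rw [hIcc, Finset.forall_mem_insert, hnew]
    refine ⟨by omega, fun v hv => ?_⟩
    rw [h.graphDeg_attachStep S hv]
    have := h.le_deg v hv
    omega
  · rw [Finset.sum_Icc_succ_top (by omega), hnew,
      Finset.sum_congr rfl fun v hv => h.graphDeg_attachStep S hv, Finset.sum_add_distrib,
      Finset.sum_ite_mem, Finset.inter_eq_right.2 hSn, Finset.sum_const, smul_eq_mul, hScard]
    linarith [h.sum_deg]

lemma le_card_lowDegSet (h : UAInvariant m d n g) (hd : 2 * m ≤ d) : m ≤ #(lowDegSet d g n) := by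
  have hdeg : ∀ v ∈ Finset.Icc 1 n,
      2 * m ≤ graphDeg g v + if graphDeg g v < d then m + 1 else 0 := fun v hv => by
    have := h.le_deg v hv
    split_ifs <;> omega
  have hsum : n * (2 * m) ≤
      ∑ v ∈ Finset.Icc 1 n, graphDeg g v + #(lowDegSet d g n) * (m + 1) := by
    calc n * (2 * m) = ∑ v ∈ Finset.Icc 1 n, 2 * m := by simp
      _ ≤ _ := Finset.sum_le_sum hdeg
      _ = _ := by
        rw [Finset.sum_add_distrib, ← Finset.sum_filter, Finset.sum_const, smul_eq_mul,
          ← lowDegSet]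
  refine Nat.le_of_mul_le_mul_right (c := m + 1) ?_ (by omega)
  linarith [h.sum_deg]

lemma choose_card_lowDegSet_ne_zero (h : UAInvariant m d n g) (hd : 2 * m ≤ d) :
    (#(lowDegSet d g n)).choose m ≠ 0 :=
  (Nat.choose_pos (h.le_card_lowDegSet hd)).ne'

end UAInvariant

lemma finite_setOf_uaInvariant (m d n : ℕ) : {g | UAInvariant m d n g}.Finite :=
  (finite_setOf_support_subset (Finset.Icc 1 n).finite_toSet).subset fun _ h => h.support_subset

namespace IsUAPath

variable {m d N n s : ℕ} {γ : ℕ → SimpleGraph ℕ}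

lemma uaInvariant (hγ : IsUAPath m d γ) (hd : 2 * m ≤ d) (hn : m ≤ n) :
    UAInvariant m d n (γ n) := by
  induction n, hn using Nat.le_induction with
  | base => exact hγ.init ▸ uaInvariant_initGraph hd
  | succ n hn ih => exact ih.of_uaStep hd (hγ.step n hn)

lemma mono (hγ : IsUAPath m d γ) (hN : m ≤ N) (hNn : N ≤ n) : γ N ≤ γ n := by
  induction n, hNn using Nat.le_induction with
  | base => exact le_rfl
  | succ n hn ih =>
    obtain ⟨S, -, hS⟩ := hγ.step n (hN.trans hn)
    exact ih.trans (hS ▸ le_attachStep)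

lemma card_filter_adj_le (hγ : IsUAPath m d γ) (hd : 2 * m ≤ d) (hN : m ≤ N)
    (hs : s ∈ Finset.Icc 1 N) (K : ℕ) [DecidablePred fun i => (γ (N + i + 1)).Adj s (N + i + 1)] :
    #{i ∈ Finset.range K | (γ (N + i + 1)).Adj s (N + i + 1)} ≤ d := by
  have hinv := hγ.uaInvariant hd (n := N + K) (by omega)
  have hinj : Function.Injective (N + · + 1) := fun i j hij => by simpa using hij
  have hsub : (Finset.image (N + · + 1)
      {i ∈ Finset.range K | (γ (N + i + 1)).Adj s (N + i + 1)} : Set ℕ) ⊆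
      (γ (N + K)).neighborSet s := by
    simp only [Finset.coe_image, Set.image_subset_iff]
    intro i hi
    obtain ⟨hiK, hadj⟩ := Finset.mem_filter.1 hi
    have := Finset.mem_range.1 hiK
    exact hγ.mono (by omega) (by omega) hadj
  rw [← Finset.card_image_of_injective _ hinj, ← Set.ncard_coe_finset]
  exact (Set.ncard_le_ncard hsub (hinv.finite_support.subset
    ((γ _).neighborSet_subset_support s))).trans
    (hinv.deg_le s (Finset.Icc_subset_Icc_right (by omega) hs))

lemma neighborSet_eq_of_graphDeg_eq (hγ : IsUAPath m d γ) (hN : m ≤ N) (hs : s ≤ N)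
    (hdeg : graphDeg (γ N) s = d) (hn : N ≤ n) :
    (γ n).neighborSet s = (γ N).neighborSet s := by
  induction n, hn using Nat.le_induction with
  | base => rfl
  | succ n hn ih =>
    obtain ⟨S, hS, hstep⟩ := hγ.step n (hN.trans hn)
    have hsS : s ∉ S := fun hsS => by
      have hlt := (mem_lowDegSet.1 ((Finset.mem_powersetCard.1 hS).1 hsS)).2
      rw [graphDeg, ih, ← graphDeg, hdeg] at hlt
      exact hlt.false
    rw [← hstep, neighborSet_attachStep_of_notMem (by omega) hsS, ih]

lemma eventually_graphDeg_eq (hγ : IsUAPath m d γ) (hN : m ≤ N) (hs : s ≤ N)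
    (hdeg : graphDeg (γ N) s = d) : ∀ᶠ n in atTop, graphDeg (γ n) s = d :=
  eventually_atTop.2 ⟨N, fun n hn => by
    rw [graphDeg, hγ.neighborSet_eq_of_graphDeg_eq hN hs hdeg hn, ← graphDeg, hdeg]⟩

lemma eventually_neighborSet_subset (hγ : IsUAPath m d γ) (hd : 2 * m ≤ d) {n₀ : ℕ}
    (hdeg : ∀ᶠ n in atTop, ∀ u ∈ Finset.Icc 1 n₀, graphDeg (γ n) u = d) :
    ∃ N, ∀ᶠ n in atTop, ∀ u ∈ Finset.Icc 1 n₀, (γ n).neighborSet u ⊆ Finset.Icc 1 N := by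
  obtain ⟨N, hdegN, hN, hn₀⟩ :=
    (hdeg.and ((eventually_ge_atTop m).and (eventually_ge_atTop n₀))).exists
  refine ⟨N, eventually_atTop.2 ⟨N, fun n hn u hu => ?_⟩⟩
  have huN : u ≤ N := (Finset.mem_Icc.1 hu).2.trans hn₀
  rw [hγ.neighborSet_eq_of_graphDeg_eq hN huN (hdegN u hu) hn]
  exact ((γ N).neighborSet_subset_support u).trans (hγ.uaInvariant hd hN).support_subset

lemma eventually_walk_graphDeg_eq (hγ : IsUAPath m d γ) (hd : 2 * m ≤ d)
    (hdeg : ∀ s, 1 ≤ s → ∀ᶠ n in atTop, graphDeg (γ n) s = d) (n₀ a : ℕ) :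
    ∀ᶠ n in atTop, ∀ v, (∃ u ∈ Finset.Icc 1 n₀, ∃ p : (γ n).Walk u v, p.length ≤ a) →
      graphDeg (γ n) v = d := by
  have hsat (k : ℕ) : ∀ᶠ n in atTop, ∀ u ∈ Finset.Icc 1 k, graphDeg (γ n) u = d :=
    (eventually_all_finset _).2 fun u hu => hdeg u (Finset.mem_Icc.1 hu).1
  induction a generalizing n₀ with
  | zero =>
    filter_upwards [hsat n₀] with n hn v ⟨u, hu, p, hp⟩
    obtain rfl := SimpleGraph.Walk.eq_of_length_eq_zero (Nat.le_zero.1 hp)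
    exact hn u hu
  | succ a ih =>
    obtain ⟨N, hN⟩ := hγ.eventually_neighborSet_subset hd (hsat n₀)
    filter_upwards [hsat n₀, hN, ih N] with n hn₀ hnbr hwalk v ⟨u, hu, p, hp⟩
    cases p with
    | nil => exact hn₀ _ hu
    | cons huw q => exact hwalk v ⟨_, hnbr u hu huw, q, Nat.le_of_succ_le_succ hp⟩

end IsUAPath

namespace IsUAProcess

variable {m d n N s : ℕ} {Ω : Type*} {G : ℕ → Ω → SimpleGraph ℕ}

lemma setOf_attach_inter_fiber_eq_biUnion (g : SimpleGraph ℕ) (𝒮 : Finset (Finset ℕ)) :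
    {ω | ∃ S ∈ 𝒮, attachStep g (n + 1) S = G (n + 1) ω} ∩ {ω | G n ω = g} =
      ⋃ S ∈ 𝒮, {ω | G (n + 1) ω = attachStep g (n + 1) S} ∩ {ω | G n ω = g} := by
  ext ω
  simp only [Set.mem_inter_iff, Set.mem_ofPred_eq, Set.mem_iUnion, exists_prop]
  grind

variable [MeasurableSpace Ω] {μ : Measure Ω}

lemma measurableSet_attach_inter_fiber (hG : IsUAProcess m d μ G) (g : SimpleGraph ℕ)
    (𝒮 : Finset (Finset ℕ)) :
    MeasurableSet ({ω | ∃ S ∈ 𝒮, attachStep g (n + 1) S = G (n + 1) ω} ∩ {ω | G n ω = g}) := by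
  rw [setOf_attach_inter_fiber_eq_biUnion]
  exact 𝒮.measurableSet_biUnion fun S _ => (hG.1 _ _).inter (hG.1 _ _)

lemma measure_attach_inter_fiber (hG : IsUAProcess m d μ G) (hn : m ≤ n) {g : SimpleGraph ℕ}
    (hg : g.support ⊆ Finset.Icc 1 n) {𝒮 : Finset (Finset ℕ)}
    (h𝒮 : 𝒮 ⊆ (lowDegSet d g n).powersetCard m) :
    μ ({ω | ∃ S ∈ 𝒮, attachStep g (n + 1) S = G (n + 1) ω} ∩ {ω | G n ω = g}) =
      #𝒮 * (μ {ω | G n ω = g} / (#(lowDegSet d g n)).choose m) := by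
  have hS : ∀ S ∈ 𝒮, S ⊆ lowDegSet d g n ∧ #S = m := fun S hS => Finset.mem_powersetCard.1 (h𝒮 hS)
  have hdisj : (𝒮 : Set (Finset ℕ)).PairwiseDisjoint
      fun S => {ω | G (n + 1) ω = attachStep g (n + 1) S} ∩ {ω | G n ω = g} := by
    intro S hS₁ T hT₁ hne
    refine Set.disjoint_left.2 fun ω hωS hωT => hne ?_
    exact attachStep_injOn hg ((hS S hS₁).1.trans lowDegSet_subset)
      ((hS T hT₁).1.trans lowDegSet_subset) (hωS.1.symm.trans hωT.1)
  rw [setOf_attach_inter_fiber_eq_biUnion,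
    measure_biUnion_finset hdisj fun S _ => (hG.1 _ _).inter (hG.1 _ _),
    Finset.sum_congr rfl fun S hS₁ => hG.2.2 n hn g S (hS S hS₁).1 (hS S hS₁).2,
    Finset.sum_const, nsmul_eq_mul]

lemma ae_uaStep_of_uaInvariant [IsFiniteMeasure μ] (hG : IsUAProcess m d μ G) (hd : 2 * m ≤ d)
    (hn : m ≤ n) :
    ∀ᵐ ω ∂μ, UAInvariant m d n (G n ω) → UAStep m d n (G n ω) (G (n + 1) ω) := by
  have hfiber : ∀ g, UAInvariant m d n g →
      ∀ᵐ ω ∂μ, G n ω = g → UAStep m d n g (G (n + 1) ω) := fun g hg => by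
    have hstep := hG.measure_attach_inter_fiber hn hg.support_subset subset_rfl
    rw [Finset.card_powersetCard, ENNReal.mul_div_cancel (Nat.cast_ne_zero.2
      (hg.choose_card_lowDegSet_ne_zero hd)) (ENNReal.natCast_ne_top _)] at hstep
    have hmeas := (hG.measurableSet_attach_inter_fiber (n := n) g
      ((lowDegSet d g n).powersetCard m)).nullMeasurableSet (μ := μ)
    filter_upwards [ae_eq_of_subset_of_measure_ge Set.inter_subset_right hstep.ge hmeas
      (measure_ne_top μ _)] with ω hω hgω
    exact (hω.mpr hgω).1
  filter_upwards [(ae_ball_iff (finite_setOf_uaInvariant m d n).countable).2 hfiber] with ω hω hg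
  exact hω _ hg rfl

lemma ae_isUAPath [IsFiniteMeasure μ] (hG : IsUAProcess m d μ G) (hd : 2 * m ≤ d) :
    ∀ᵐ ω ∂μ, IsUAPath m d (G · ω) := by
  have hstep : ∀ᵐ ω ∂μ, ∀ n, m ≤ n →
      UAInvariant m d n (G n ω) → UAStep m d n (G n ω) (G (n + 1) ω) :=
    ae_all_iff.2 fun n => eventually_imp_distrib_left.2 fun hn => hG.ae_uaStep_of_uaInvariant hd hn
  filter_upwards [hstep] with ω hω
  have hinv : ∀ n, m ≤ n → UAInvariant m d n (G n ω) := fun n hn => by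
    induction n, hn using Nat.le_induction with
    | base => exact hG.2.1 ω ▸ uaInvariant_initGraph hd
    | succ n hn ih => exact ih.of_uaStep hd (hω n hn ih)
  exact ⟨hG.2.1 ω, fun n hn => hω n hn (hinv n hn)⟩

lemma ae_uaInvariant [IsFiniteMeasure μ] (hG : IsUAProcess m d μ G) (hd : 2 * m ≤ d)
    (hn : m ≤ n) : ∀ᵐ ω ∂μ, UAInvariant m d n (G n ω) :=
  (hG.ae_isUAPath hd).mono fun _ hω => hω.uaInvariant hd hn

lemma nullMeasurableSet_setOf [IsFiniteMeasure μ] (hG : IsUAProcess m d μ G) (hd : 2 * m ≤ d)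
    (hn : m ≤ n) (P : SimpleGraph ℕ → Prop) : NullMeasurableSet {ω | P (G n ω)} μ :=
  nullMeasurableSet_preimage_of_ae_mem_countable (finite_setOf_uaInvariant m d n).countable
    (fun g _ => hG.1 n g) (hG.ae_uaInvariant hd hn) {g | P g}

lemma measure_fiber_le_mul_measure_adj (hG : IsUAProcess m d μ G) (hm : 1 ≤ m) (hd : 2 * m ≤ d)
    (hn : m ≤ n) {g : SimpleGraph ℕ} (hg : UAInvariant m d n g) (hs : s ∈ lowDegSet d g n) :
    μ {ω | G n ω = g} ≤ n * μ ({ω | (G (n + 1) ω).Adj s (n + 1)} ∩ {ω | G n ω = g}) := by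
  set A := lowDegSet d g n
  set 𝒮 := {S ∈ A.powersetCard m | s ∈ S}
  have hC : ((#A).choose m : ℝ≥0∞) ≠ 0 := Nat.cast_ne_zero.2 (hg.choose_card_lowDegSet_ne_zero hd)
  have hcount : (#A).choose m ≤ n * #𝒮 := by
    calc (#A).choose m ≤ m * (#A).choose m := Nat.le_mul_of_pos_left _ hm
      _ = #A * #𝒮 := (card_mul_card_filter_mem_powersetCard hs m).symm
      _ ≤ n * #𝒮 := Nat.mul_le_mul_right _ card_lowDegSet_le
  have hadj : {ω | ∃ S ∈ 𝒮, attachStep g (n + 1) S = G (n + 1) ω} ⊆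
      {ω | (G (n + 1) ω).Adj s (n + 1)} := by
    rintro ω ⟨S, hS, hstep⟩
    have hsn : s ≠ n + 1 := by
      rintro rfl
      exact succ_notMem_of_subset_Icc lowDegSet_subset hs
    change (G (n + 1) ω).Adj s (n + 1)
    rw [← hstep, attachStep_adj]
    exact .inr ⟨hsn, .inr ⟨rfl, (Finset.mem_filter.1 hS).2⟩⟩
  calc μ {ω | G n ω = g}
      = (#A).choose m * (μ {ω | G n ω = g} / (#A).choose m) :=
        (ENNReal.mul_div_cancel hC (ENNReal.natCast_ne_top _)).symm
    _ ≤ (n * #𝒮 : ℕ) * (μ {ω | G n ω = g} / (#A).choose m) := by gcongr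
    _ = n * μ ({ω | ∃ S ∈ 𝒮, attachStep g (n + 1) S = G (n + 1) ω} ∩ {ω | G n ω = g}) := by
        rw [hG.measure_attach_inter_fiber hn hg.support_subset (Finset.filter_subset _ _),
          Nat.cast_mul, mul_assoc]
    _ ≤ n * μ ({ω | (G (n + 1) ω).Adj s (n + 1)} ∩ {ω | G n ω = g}) := by gcongr

lemma measure_graphDeg_lt_le_mul_measure_adj [IsFiniteMeasure μ] (hG : IsUAProcess m d μ G)
    (hm : 1 ≤ m) (hd : 2 * m ≤ d) (hn : m ≤ n) (hs : s ∈ Finset.Icc 1 n) :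
    μ {ω | graphDeg (G n ω) s < d} ≤ n * μ {ω | (G (n + 1) ω).Adj s (n + 1)} :=
  measure_preimage_le_mul_of_fiber_le (t := {g | graphDeg g s < d}) (finite_setOf_uaInvariant m d n)
    (fun g _ => hG.1 n g) (hG.ae_uaInvariant hd hn) fun _ ⟨hg, hlt⟩ =>
      hG.measure_fiber_le_mul_measure_adj hm hd hn hg (mem_lowDegSet.2 ⟨hs, hlt⟩)

lemma tsum_measure_adj_le [IsFiniteMeasure μ] (hG : IsUAProcess m d μ G) (hd : 2 * m ≤ d)
    (hN : m ≤ N) (hs : s ∈ Finset.Icc 1 N) :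
    ∑' i : ℕ, μ {ω | (G (N + i + 1) ω).Adj s (N + i + 1)} ≤ d * μ Set.univ := by
  classical
  refine ENNReal.tsum_le_of_sum_range_le fun K => ?_
  refine sum_measure_le_mul_measure_univ (fun i _ => hG.nullMeasurableSet_setOf hd (by omega)
    fun g => g.Adj s (N + i + 1)) ?_
  filter_upwards [hG.ae_isUAPath hd] with ω hω
  exact hω.card_filter_adj_le hd hN hs K

lemma measure_forall_graphDeg_lt_eq_zero [IsFiniteMeasure μ] (hG : IsUAProcess m d μ G)
    (hm : 1 ≤ m) (hd : 2 * m ≤ d) (hN : m ≤ N) (hs : s ∈ Finset.Icc 1 N) :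
    μ {ω | ∀ n, N ≤ n → graphDeg (G n ω) s < d} = 0 := by
  set B := {ω | ∀ n, N ≤ n → graphDeg (G n ω) s < d}
  have hB (i : ℕ) : ((N + i : ℕ) : ℝ≥0∞)⁻¹ * μ B ≤
      μ {ω | (G (N + i + 1) ω).Adj s (N + i + 1)} := by
    rw [mul_comm, ← div_eq_mul_inv]
    have hsub : B ⊆ {ω | graphDeg (G (N + i) ω) s < d} := fun ω hω => hω (N + i) (by omega)
    refine ENNReal.div_le_of_le_mul' ((measure_mono hsub).trans ?_)
    exact hG.measure_graphDeg_lt_le_mul_measure_adj hm hd (by omega)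
      (Finset.Icc_subset_Icc_right (by omega) hs)
  by_contra hpos
  have htop : ∑' i : ℕ, ((N + i : ℕ) : ℝ≥0∞)⁻¹ * μ B = ⊤ := by
    rw [ENNReal.tsum_mul_right, tsum_inv_natCast_add_eq_top (by omega), ENNReal.top_mul hpos]
  have hle := (ENNReal.tsum_le_tsum hB).trans (hG.tsum_measure_adj_le hd hN hs)
  rw [htop, top_le_iff] at hle
  exact ENNReal.mul_ne_top (ENNReal.natCast_ne_top d) (measure_ne_top μ _) hle

lemma ae_eventually_graphDeg_eq [IsFiniteMeasure μ] (hG : IsUAProcess m d μ G) (hm : 1 ≤ m)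
    (hd : 2 * m ≤ d) (hs : 1 ≤ s) : ∀ᵐ ω ∂μ, ∀ᶠ n in atTop, graphDeg (G n ω) s = d := by
  have hsN : s ∈ Finset.Icc 1 (max m s) := Finset.mem_Icc.2 ⟨hs, le_max_right m s⟩
  have hzero := hG.measure_forall_graphDeg_lt_eq_zero hm hd (le_max_left m s) hsN
  filter_upwards [hG.ae_isUAPath hd, measure_eq_zero_iff_ae_notMem.1 hzero] with ω hpath hω
  obtain ⟨n, hn, hdn⟩ : ∃ n, max m s ≤ n ∧ d ≤ graphDeg (G n ω) s := by
    simpa only [Set.mem_ofPred_eq, not_forall, not_lt, exists_prop] using hω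
  have hmn : m ≤ n := (le_max_left m s).trans hn
  have hsn : s ∈ Finset.Icc 1 n := Finset.Icc_subset_Icc_right hn hsN
  exact hpath.eventually_graphDeg_eq hmn (Finset.mem_Icc.1 hsn).2
    (((hpath.uaInvariant hd hmn).deg_le s hsn).antisymm hdn)

end IsUAProcess

theorem uniform_attachment_initial_degrees_general
    (m d : ℕ) (hm : 1 ≤ m) (hd : 2 * m ≤ d)
    {Ω : Type*} [MeasurableSpace Ω] (μ : Measure Ω) [IsFiniteMeasure μ]
    (G : ℕ → Ω → SimpleGraph ℕ) (hG : IsUAProcess m d μ G) :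
    ∀ᵐ ω ∂μ, ∀ n₀ a : ℕ, ∀ᶠ n in atTop, ∀ v : ℕ,
      (∃ u ∈ Finset.Icc 1 n₀, ∃ p : (G n ω).Walk u v, p.length ≤ a) →
      graphDeg (G n ω) v = d := by
  have hsat : ∀ᵐ ω ∂μ, ∀ s, 1 ≤ s → ∀ᶠ n in atTop, graphDeg (G n ω) s = d :=
    ae_all_iff.2 fun s => eventually_imp_distrib_left.2 fun hs =>
      hG.ae_eventually_graphDeg_eq hm hd hs
  filter_upwards [hG.ae_isUAPath hd, hsat] with ω hpath hdeg n₀ a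
  exact hpath.eventually_walk_graphDeg_eq hd hdeg n₀ a

/-- In the bounded-degree uniform attachment process, for any fixed `s ≥ m` the degree of
vertex `s` in `G_n` equals `d` with high probability; moreover, for any fixed `n₀` and `a`,
with high probability every vertex of `G_n` at graph distance at most `a` from
`[n₀] = {1,…,n₀}` has degree exactly `d` in `G_n`. -/
theorem uniform_attachment_initial_degrees
    (m d : ℕ) (hm : 1 ≤ m) (hd : 2 * m < d)
    {Ω : Type*} [MeasurableSpace Ω] (μ : Measure Ω) [IsProbabilityMeasure μ]
    (G : ℕ → Ω → SimpleGraph ℕ) (hG : IsUAProcess m d μ G) :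
    (∀ s : ℕ, m ≤ s →
      Tendsto (fun n : ℕ => μ {ω | graphDeg (G n ω) s = d}) atTop (𝓝 1)) ∧
    (∀ n₀ a : ℕ,
      Tendsto (fun n : ℕ => μ {ω | ∀ v : ℕ,
          (∃ u ∈ Finset.Icc 1 n₀, ∃ p : (G n ω).Walk u v, p.length ≤ a) →
          graphDeg (G n ω) v = d})
        atTop (𝓝 1)) := by
  have hgen := uniform_attachment_initial_degrees_general m d hm hd.le μ G hG
  simp_rw [← measure_univ (μ := μ)]
  refine ⟨fun s hs => tendsto_measure_of_ae_eventually (hgen.mono fun ω hω => ?_), fun n₀ a =>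
    tendsto_measure_of_ae_eventually (hgen.mono fun ω hω => hω n₀ a)⟩
  exact (hω s 0).mono fun n hn => hn s ⟨s, Finset.mem_Icc.2 ⟨hm.trans hs, le_rfl⟩, .nil, le_rfl⟩
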